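/- Let Ω = (a,b) ⊂ ℝ be a bounded open interval with a < b, let ε > 0, T > 0, let γ ∈ C²([0,∞)), and let v, w, Θ be real-valued C^∞ functions on [a,b] × [0,T] with Θ ≥ 0, such that v_t = ε v_xx + w in Ω × (0,T) and v_x(a,t) = v_x(b,t) = w_x(a,t) = w_x(b,t) = 0 for all t ∈ (0,T). Then for every t ∈ (0,T): − ∫_a^b γ(Θ) v_xx w_xx = − (1/2) d/dt ∫_a^b γ(Θ) v_xx² + (1/2) ∫_a^b γ'(Θ) Θ_t v_xx² − ε ∫_a^b γ(Θ) v_xxx² − ε ∫_a^b γ'(Θ) Θ_x v_xx v_xxx. -/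

import Mathlib

/-!
Differentiating under the integral sign,
`d/dt ∫ γ(Θ) v_xx² = ∫ γ'(Θ) Θ_t v_xx² + 2 ∫ γ(Θ) v_xx v_xxt`,
and the equation differentiated twice in `x` gives `v_xxt = ε v_xxxx + w_xx`.
Integrating `∫ γ(Θ) v_xx v_xxxx` by parts produces the two remaining terms and the boundary
contribution `[γ(Θ) v_xx v_xxx]`. The latter vanishes: the equation differentiated once in `x`
holds up to the endpoints by continuity, where it reads `v_xt = ε v_xxx + w_x`; the Neumann
conditions give `w_x = 0` and, being valid for all times, also `v_xt = 0`, so `v_xxx = 0`.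

The supporting facts are that `pdx` and `pdt` preserve smoothness (`contDiff_pdx`, `contDiff_pdt`)
and commute (`pdx_pdt_comm`), that a function vanishing on `(a, b)` at a fixed time has `∂ₓ` vanishing
on `[a, b]` (`pdx_eq_zero`), and differentiation under the integral for a jointly continuous
time derivative (`hasDerivAt_integral_of_continuous`).
-/

open MeasureTheory Set

/-- Partial derivative in the space variable. -/
noncomputable def pdx (f : ℝ → ℝ → ℝ) : ℝ → ℝ → ℝ := fun x t => deriv (fun y => f y t) x

/-- Partial derivative in the time variable. -/
noncomputable def pdt (f : ℝ → ℝ → ℝ) : ℝ → ℝ → ℝ := fun x t => deriv (fun s => f x s) t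

section PartialDerivatives

variable {f : ℝ → ℝ → ℝ}

theorem hasDerivAt_fderiv_x (hf : ContDiff ℝ (⊤ : ℕ∞) (Function.uncurry f)) (x t : ℝ) :
    HasDerivAt (fun y => f y t) (fderiv ℝ (Function.uncurry f) (x, t) (1, 0)) x := by
  have h := (hf.differentiable (by simp) (x, t)).hasFDerivAt
  exact h.comp_hasDerivAt (f := fun y : ℝ => (y, t)) x
    ((hasDerivAt_id x).prodMk (hasDerivAt_const x t))

theorem hasDerivAt_fderiv_t (hf : ContDiff ℝ (⊤ : ℕ∞) (Function.uncurry f)) (x t : ℝ) :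
    HasDerivAt (fun s => f x s) (fderiv ℝ (Function.uncurry f) (x, t) (0, 1)) t := by
  have h := (hf.differentiable (by simp) (x, t)).hasFDerivAt
  exact h.comp_hasDerivAt (f := fun s : ℝ => (x, s)) t
    ((hasDerivAt_const t x).prodMk (hasDerivAt_id t))

theorem hasDerivAt_pdx (hf : ContDiff ℝ (⊤ : ℕ∞) (Function.uncurry f)) (x t : ℝ) :
    HasDerivAt (fun y => f y t) (pdx f x t) x :=
  (hasDerivAt_fderiv_x hf x t).differentiableAt.hasDerivAt

theorem hasDerivAt_pdt (hf : ContDiff ℝ (⊤ : ℕ∞) (Function.uncurry f)) (x t : ℝ) :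
    HasDerivAt (fun s => f x s) (pdt f x t) t :=
  (hasDerivAt_fderiv_t hf x t).differentiableAt.hasDerivAt

theorem uncurry_pdx (hf : ContDiff ℝ (⊤ : ℕ∞) (Function.uncurry f)) :
    Function.uncurry (pdx f) = fun p => fderiv ℝ (Function.uncurry f) p (1, 0) :=
  funext fun p => (hasDerivAt_fderiv_x hf p.1 p.2).deriv

theorem uncurry_pdt (hf : ContDiff ℝ (⊤ : ℕ∞) (Function.uncurry f)) :
    Function.uncurry (pdt f) = fun p => fderiv ℝ (Function.uncurry f) p (0, 1) :=
  funext fun p => (hasDerivAt_fderiv_t hf p.1 p.2).deriv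

theorem contDiff_pdx (hf : ContDiff ℝ (⊤ : ℕ∞) (Function.uncurry f)) :
    ContDiff ℝ (⊤ : ℕ∞) (Function.uncurry (pdx f)) := by
  rw [uncurry_pdx hf]
  exact (hf.fderiv_right (by simp)).clm_apply contDiff_const

theorem contDiff_pdt (hf : ContDiff ℝ (⊤ : ℕ∞) (Function.uncurry f)) :
    ContDiff ℝ (⊤ : ℕ∞) (Function.uncurry (pdt f)) := by
  rw [uncurry_pdt hf]
  exact (hf.fderiv_right (by simp)).clm_apply contDiff_const

theorem pdx_pdt_comm (hf : ContDiff ℝ (⊤ : ℕ∞) (Function.uncurry f)) :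
    pdx (pdt f) = pdt (pdx f) := by
  funext x t
  have hd : DifferentiableAt ℝ (fderiv ℝ (Function.uncurry f)) (x, t) :=
    (hf.fderiv_right (m := 1) (by norm_cast)).differentiable (by simp) _
  have h1 := congrFun (uncurry_pdx (contDiff_pdt hf)) (x, t)
  have h2 := congrFun (uncurry_pdt (contDiff_pdx hf)) (x, t)
  simp only [uncurry_pdx hf, uncurry_pdt hf, Function.uncurry_apply_pair] at h1 h2
  rw [h1, h2, fderiv_clm_apply hd (differentiableAt_const _),
    fderiv_clm_apply hd (differentiableAt_const _)]
  have hs : IsSymmSndFDerivAt ℝ (Function.uncurry f) (x, t) :=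
    hf.contDiffAt.isSymmSndFDerivAt (by simp; norm_cast)
  simpa using hs.eq (1, 0) (0, 1)

/-- Only interior vanishing is needed: continuity of `∂ₓ f` carries it to the endpoints. -/
theorem pdx_eq_zero (hf : ContDiff ℝ (⊤ : ℕ∞) (Function.uncurry f)) {a b t : ℝ} (hab : a < b)
    (h0 : ∀ x ∈ Ioo a b, f x t = 0) : ∀ x ∈ Icc a b, pdx f x t = 0 := by
  have hc : Continuous fun x => pdx f x t :=
    (contDiff_pdx hf).continuous.comp (by fun_prop : Continuous fun x : ℝ => (x, t))
  have hz : EqOn (fun x => pdx f x t) (fun _ => 0) (Ioo a b) := by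
    intro x hx
    have he : (fun y => f y t) =ᶠ[nhds x] fun _ => 0 := by
      filter_upwards [isOpen_Ioo.mem_nhds hx] with y hy using h0 y hy
    exact he.deriv_eq.trans (deriv_const x 0)
  have := hz.closure hc continuous_const
  rwa [closure_Ioo hab.ne] at this

end PartialDerivatives

theorem hasDerivAt_integral_of_continuous {F F' : ℝ → ℝ → ℝ} {a b : ℝ}
    (hF : Continuous (Function.uncurry F)) (hF' : Continuous (Function.uncurry F'))
    (hd : ∀ x t, HasDerivAt (fun s => F x s) (F' x t) t) (t : ℝ) :
    HasDerivAt (fun s => ∫ x in a..b, F x s) (∫ x in a..b, F' x t) t := by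
  -- A constant dominates the derivative on the compact set `[a, b] × [t - 1, t + 1]`.
  obtain ⟨C, hC⟩ := ((isCompact_uIcc (a := a) (b := b)).prod
    (isCompact_Icc (a := t - 1) (b := t + 1))).exists_bound_of_continuousOn hF'.continuousOn
  have hFs : ∀ s, Continuous fun x => F x s := fun s =>
    hF.comp (by fun_prop : Continuous fun x : ℝ => (x, s))
  have hFs' : ∀ s, Continuous fun x => F' x s := fun s =>
    hF'.comp (by fun_prop : Continuous fun x : ℝ => (x, s))
  refine (intervalIntegral.hasDerivAt_integral_of_dominated_loc_of_deriv_le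
    (F := fun s x => F x s) (F' := fun s x => F' x s) (bound := fun _ => C)
    (s := Icc (t - 1) (t + 1)) (Icc_mem_nhds (by linarith) (by linarith))
    (Filter.Eventually.of_forall fun s => (hFs s).aestronglyMeasurable)
    ((hFs t).intervalIntegrable _ _) (hFs' t).aestronglyMeasurable ?_
    intervalIntegrable_const ?_).2
  · exact Filter.Eventually.of_forall fun x hx s hs => hC (x, s) ⟨uIoc_subset_uIcc hx, hs⟩
  · exact Filter.Eventually.of_forall fun x _ s _ => hd x s


/-- Integration-by-parts identity for `−∫ γ(Θ) v_xx w_xx` when `v_t = ε v_xx + w`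
with Neumann boundary conditions. -/
theorem gamma_vxx_identity (a b ε T : ℝ) (hab : a < b) (hε : 0 < ε) (hT : 0 < T)
    (γ : ℝ → ℝ) (hγreg : ContDiff ℝ 2 γ)
    (v w Θ : ℝ → ℝ → ℝ)
    (hv : ContDiff ℝ (⊤ : ℕ∞) (Function.uncurry v)) (hw : ContDiff ℝ (⊤ : ℕ∞) (Function.uncurry w))
    (hΘ : ContDiff ℝ (⊤ : ℕ∞) (Function.uncurry Θ))
    (hΘnn : ∀ x ∈ Icc a b, ∀ t ∈ Icc (0:ℝ) T, 0 ≤ Θ x t)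
    (heq : ∀ x ∈ Ioo a b, ∀ t ∈ Ioo (0:ℝ) T, pdt v x t = ε * pdx (pdx v) x t + w x t)
    (hbc : ∀ t ∈ Ioo (0:ℝ) T,
      pdx v a t = 0 ∧ pdx v b t = 0 ∧ pdx w a t = 0 ∧ pdx w b t = 0) :
    ∀ t ∈ Ioo (0:ℝ) T, ∃ y' : ℝ,
      HasDerivAt (fun s => ∫ x in a..b, γ (Θ x s) * (pdx (pdx v) x s) ^ 2) y' t ∧
      -(∫ x in a..b, γ (Θ x t) * pdx (pdx v) x t * pdx (pdx w) x t)
        = -(1/2 : ℝ) * y'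
          + (1/2 : ℝ) * (∫ x in a..b, deriv γ (Θ x t) * pdt Θ x t * (pdx (pdx v) x t) ^ 2)
          - ε * (∫ x in a..b, γ (Θ x t) * (pdx (pdx (pdx v)) x t) ^ 2)
          - ε * (∫ x in a..b,
              deriv γ (Θ x t) * pdx Θ x t * pdx (pdx v) x t * pdx (pdx (pdx v)) x t) := by
  intro t ht
  have hvx := contDiff_pdx hv
  have hvxx := contDiff_pdx hvx
  have hvxxx := contDiff_pdx hvxx
  have hvxxxx := contDiff_pdx hvxxx
  have hvt := contDiff_pdt hv
  have hvtx := contDiff_pdx hvt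
  have hvtxx := contDiff_pdx hvtx
  have hwx := contDiff_pdx hw
  have hwxx := contDiff_pdx hwx
  have hΘx := contDiff_pdx hΘ
  have hΘt := contDiff_pdt hΘ
  have cγ : Continuous γ := hγreg.continuous
  have cγ' : Continuous (deriv γ) := hγreg.continuous_deriv (by norm_num)
  have hγd : ∀ y, HasDerivAt γ (deriv γ y) y := fun y =>
    (hγreg.differentiable (by norm_num) y).hasDerivAt
  -- The residual of the equation and its first two space derivatives.
  set e : ℝ → ℝ → ℝ := fun x t => pdt v x t - ε * pdx (pdx v) x t - w x t with he_def
  have he : ContDiff ℝ (⊤ : ℕ∞) (Function.uncurry e) :=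
    (hvt.sub (contDiff_const.mul hvxx)).sub hw
  have hex : pdx e = fun x t => pdx (pdt v) x t - ε * pdx (pdx (pdx v)) x t - pdx w x t := by
    funext x s
    exact (((hasDerivAt_pdx hvt x s).sub ((hasDerivAt_pdx hvxx x s).const_mul ε)).sub
      (hasDerivAt_pdx hw x s)).deriv
  have hexx : pdx (pdx e) = fun x t =>
      pdx (pdx (pdt v)) x t - ε * pdx (pdx (pdx (pdx v))) x t - pdx (pdx w) x t := by
    funext x s
    rw [hex]
    exact (((hasDerivAt_pdx hvtx x s).sub ((hasDerivAt_pdx hvxxx x s).const_mul ε)).sub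
      (hasDerivAt_pdx hwx x s)).deriv
  have hex0 : ∀ x ∈ Icc a b, pdx e x t = 0 :=
    pdx_eq_zero he hab fun x hx => by simp only [he_def]; rw [heq x hx t ht]; ring
  have hexx0 : ∀ x ∈ Icc a b, pdx (pdx e) x t = 0 :=
    pdx_eq_zero (contDiff_pdx he) hab fun x hx => hex0 x (Ioo_subset_Icc_self hx)
  have hcomm : pdt (pdx (pdx v)) = pdx (pdx (pdt v)) := by
    rw [← pdx_pdt_comm hvx, ← pdx_pdt_comm hv]
  -- `v_x` vanishes at an endpoint for all times near `t`, hence so does `v_xt`, and then `v_xxx`.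
  have hbdry : ∀ c ∈ Icc a b, (∀ s ∈ Ioo (0 : ℝ) T, pdx v c s = 0) → pdx w c t = 0 →
      pdx (pdx (pdx v)) c t = 0 := by
    intro c hc hvc hwc
    have h1 : pdt (pdx v) c t = 0 := by
      have : (fun s => pdx v c s) =ᶠ[nhds t] fun _ => 0 := by
        filter_upwards [isOpen_Ioo.mem_nhds ht] with s hs using hvc s hs
      exact this.deriv_eq.trans (deriv_const t 0)
    have h2 := hex0 c hc
    rw [hex] at h2
    simp only [pdx_pdt_comm hv, h1, hwc] at h2
    have h3 : ε * pdx (pdx (pdx v)) c t = 0 := by linarith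
    exact (mul_eq_zero.mp h3).resolve_left hε.ne'
  have hba : pdx (pdx (pdx v)) a t = 0 :=
    hbdry a (left_mem_Icc.mpr hab.le) (fun s hs => (hbc s hs).1) (hbc t ht).2.2.1
  have hbb : pdx (pdx (pdx v)) b t = 0 :=
    hbdry b (right_mem_Icc.mpr hab.le) (fun s hs => (hbc s hs).2.1) (hbc t ht).2.2.2
  have slice : ∀ {f : ℝ → ℝ → ℝ}, ContDiff ℝ (⊤ : ℕ∞) (Function.uncurry f) →
      Continuous fun x => f x t := fun hf =>
    hf.continuous.comp (by fun_prop : Continuous fun x : ℝ => (x, t))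
  have cΘ := slice hΘ
  have cΘx := slice hΘx
  have cΘt := slice hΘt
  have cvxx := slice hvxx
  have cvxxx := slice hvxxx
  have cvxxxx := slice hvxxxx
  have cwxx := slice hwxx
  have cγΘ := cγ.comp cΘ
  have cγ'Θ := cγ'.comp cΘ
  simp only [Function.comp_def] at cγΘ cγ'Θ
  have jΘ : Continuous fun p : ℝ × ℝ => Θ p.1 p.2 := hΘ.continuous
  have jΘt : Continuous fun p : ℝ × ℝ => pdt Θ p.1 p.2 := hΘt.continuous
  have jvxx : Continuous fun p : ℝ × ℝ => pdx (pdx v) p.1 p.2 := hvxx.continuous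
  have jvtxx : Continuous fun p : ℝ × ℝ => pdx (pdx (pdt v)) p.1 p.2 := hvtxx.continuous
  have hder := hasDerivAt_integral_of_continuous (a := a) (b := b)
    (F := fun x s => γ (Θ x s) * (pdx (pdx v) x s) ^ 2)
    (F' := fun x s => deriv γ (Θ x s) * pdt Θ x s * (pdx (pdx v) x s) ^ 2
      + γ (Θ x s) * (2 * pdx (pdx v) x s * pdx (pdx (pdt v)) x s))
    (by unfold Function.uncurry; fun_prop) (by unfold Function.uncurry; fun_prop)
    (fun x s => by
      have h1 := (hγd (Θ x s)).comp s (hasDerivAt_pdt hΘ x s)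
      have h2 := (hasDerivAt_pdt hvxx x s).fun_pow 2
      rw [hcomm] at h2
      simpa using h1.fun_mul h2) t
  refine ⟨_, hder, ?_⟩
  have hparts : ∫ x in a..b, (γ (Θ x t) * pdx (pdx v) x t) * pdx (pdx (pdx (pdx v))) x t
      = -∫ x in a..b, (deriv γ (Θ x t) * pdx Θ x t * pdx (pdx v) x t
          + γ (Θ x t) * pdx (pdx (pdx v)) x t) * pdx (pdx (pdx v)) x t := by
    rw [intervalIntegral.integral_mul_deriv_eq_deriv_mul
      (u := fun x => γ (Θ x t) * pdx (pdx v) x t)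
      (v := fun x => pdx (pdx (pdx v)) x t)
      (u' := fun x => deriv γ (Θ x t) * pdx Θ x t * pdx (pdx v) x t
          + γ (Θ x t) * pdx (pdx (pdx v)) x t)
      (fun x _ => ((hγd (Θ x t)).comp x (hasDerivAt_pdx hΘ x t)).mul (hasDerivAt_pdx hvxx x t))
      (fun x _ => hasDerivAt_pdx hvxxx x t)
      (Continuous.intervalIntegrable (by fun_prop) _ _)
      (Continuous.intervalIntegrable (by fun_prop) _ _)]
    simp [hba, hbb]
  have hsplit : ∫ x in a..b, (deriv γ (Θ x t) * pdx Θ x t * pdx (pdx v) x t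
          + γ (Θ x t) * pdx (pdx (pdx v)) x t) * pdx (pdx (pdx v)) x t
      = (∫ x in a..b, deriv γ (Θ x t) * pdx Θ x t * pdx (pdx v) x t * pdx (pdx (pdx v)) x t)
        + ∫ x in a..b, γ (Θ x t) * (pdx (pdx (pdx v)) x t) ^ 2 := by
    rw [← intervalIntegral.integral_add (Continuous.intervalIntegrable (by fun_prop) _ _)
      (Continuous.intervalIntegrable (by fun_prop) _ _)]
    exact intervalIntegral.integral_congr fun x _ => by ring
  have hy' : ∫ x in a..b, (deriv γ (Θ x t) * pdt Θ x t * (pdx (pdx v) x t) ^ 2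
        + γ (Θ x t) * (2 * pdx (pdx v) x t * pdx (pdx (pdt v)) x t))
      = (∫ x in a..b, deriv γ (Θ x t) * pdt Θ x t * (pdx (pdx v) x t) ^ 2)
        + ((2 * ε) * (∫ x in a..b, (γ (Θ x t) * pdx (pdx v) x t) * pdx (pdx (pdx (pdx v))) x t)
          + 2 * ∫ x in a..b, γ (Θ x t) * pdx (pdx v) x t * pdx (pdx w) x t) := by
    rw [← intervalIntegral.integral_const_mul, ← intervalIntegral.integral_const_mul,
      ← intervalIntegral.integral_add (Continuous.intervalIntegrable (by fun_prop) _ _)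
        (Continuous.intervalIntegrable (by fun_prop) _ _),
      ← intervalIntegral.integral_add (Continuous.intervalIntegrable (by fun_prop) _ _)
        (Continuous.intervalIntegrable (by fun_prop) _ _)]
    refine intervalIntegral.integral_congr fun x hx => ?_
    rw [uIcc_of_le hab.le] at hx
    have h := hexx0 x hx
    rw [hexx] at h
    have h' : pdx (pdx (pdt v)) x t
        = ε * pdx (pdx (pdx (pdx v))) x t + pdx (pdx w) x t := by
      linear_combination h
    simp only [h']
    ring
  rw [hy', hparts, hsplit]
  ring
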